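/- Let f be a non-constant meromorphic function on ℂ of finite order, and let η ≠ 0 be a finite complex number. Then T(r, f(z + η)) = T(r, f(z)) + S(r, f); that is, there exists a set E ⊆ [1, ∞) of finite logarithmic measure (∫_E dt/t < ∞) such that (T(r, f(z+η)) − T(r, f)) / T(r, f) → 0 as r → ∞ with r ∉ E. -/

import Mathlib

/-!
Write `h = ‖η‖` and `f_η z = f (z + η)`. The characteristic `charT` agrees at positive radii with
the characteristic of Mathlib's value distribution theory (`charT_eq`), so that Cartan's formula
and the First Main Theorem are available.

The zeros of `f_η - a` are the zeros of `f - a` translated by `-η`. An elementary inequality between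
the logarithmic weights of a point and of its translate (`logWeight_shift_le`, from Bernoulli's
inequality) gives, for fixed `R ≥ 1` and all `r ≥ R`,
`N(r, f_η, a) ≤ (1 + h / R) N(r + h, f, a) + N(R, f_η, a)`. By Cartan's formula, the mean of
`N(r, f, a)` over `|a| = 1` is `T(r, f)` up to a constant, whence
`T(r, f_η) ≤ (1 + h / R) T(r + h, f) + C` (`characteristic_shift_le`). The same inequality for the
translation by `-η`, taken at radius `r - h`, bounds `T(r - h, f)` by
`(1 + h / R) T(r, f_η) + C'`.

A Borel type argument (`growth_lemma`) shows that a nondecreasing unbounded `T` of finite order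
satisfies `T(r + h) / T(r - h) → 1` outside a set of finite logarithmic measure. The constants are
absorbed since `T(r, f) → ∞`, and letting `R → ∞` yields `T(r, f_η) / T(r, f) → 1` there.

Here `f` is a total function `ℂ → ℂ`, so a non-constant `f` may still agree with a constant outside a discrete
set; this is the only case in which `T(r, f)` stays bounded (`tendsto_characteristic_or_const`), and
then both characteristics are equal.
-/

open Filter Topology MeasureTheory

/-- `log⁺ x = max 0 (log x)`. -/
noncomputable def logPlus (x : ℝ) : ℝ := max 0 (Real.log x)

/-- The multiplicity of `z` as a pole of `f`: the least `n` such that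
`(w - z)^n * f w` has a finite limit as `w → z`; it is `0` unless `z` is a pole. -/
noncomputable def poleMult (f : ℂ → ℂ) (z : ℂ) : ℕ :=
  sInf {n : ℕ | ∃ c : ℂ, Filter.Tendsto (fun w => (w - z) ^ n * f w) (𝓝[≠] z) (𝓝 c)}

/-- `n(t, f)`: the number of poles of `f` in the closed disc `|z| ≤ t`,
counted with multiplicity. -/
noncomputable def poleCount (f : ℂ → ℂ) (t : ℝ) : ℝ :=
  ∑' z : ℂ, Set.indicator (Metric.closedBall (0 : ℂ) t) (fun w => (poleMult f w : ℝ)) z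

/-- The Nevanlinna counting function
`N(r, f) = ∫₀ʳ (n(t,f) - n(0,f))/t dt + n(0,f) log r`. -/
noncomputable def countingN (f : ℂ → ℂ) (r : ℝ) : ℝ :=
  (∫ t in (0:ℝ)..r, (poleCount f t - poleCount f 0) / t) + poleCount f 0 * Real.log r

/-- The Nevanlinna proximity function
`m(r, f) = (1/2π) ∫₀^{2π} log⁺ |f(r e^{iθ})| dθ`. -/
noncomputable def proximityM (f : ℂ → ℂ) (r : ℝ) : ℝ :=
  (2 * Real.pi)⁻¹ * ∫ θ in (0:ℝ)..(2 * Real.pi),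
    logPlus ‖f ((r : ℂ) * Complex.exp (θ * Complex.I))‖

/-- The Nevanlinna characteristic `T(r, f) = m(r, f) + N(r, f)`. -/
noncomputable def charT (f : ℂ → ℂ) (r : ℝ) : ℝ := proximityM f r + countingN f r

/-- The order of growth `λ(f) = limsup_{r→∞} log⁺ T(r,f) / log r`, in `EReal`. -/
noncomputable def growthOrder (f : ℂ → ℂ) : EReal :=
  Filter.limsup (fun r : ℝ => ((logPlus (charT f r) / Real.log r : ℝ) : EReal))
    Filter.atTop

/-- `E ⊆ [1, ∞)` has finite logarithmic measure: `∫_E dt/t < ∞`. -/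
def FiniteLogMeasure (E : Set ℝ) : Prop :=
  MeasurableSet E ∧ E ⊆ Set.Ici 1 ∧ (∫⁻ t in E, ENNReal.ofReal t⁻¹) < ⊤

open Function MeromorphicOn ValueDistribution

/-! ### Comparison with the value distribution theory of Mathlib -/

/-- Multiplicities of poles agree with the negative part of the divisor. -/
lemma poleMult_eq {f : ℂ → ℂ} (hf : Meromorphic f) (z : ℂ) :
    (poleMult f z : ℤ) = (divisor f Set.univ)⁻ z := by
  have hfO : MeromorphicOn f Set.univ := meromorphicOn_univ.2 hf
  have hset : {n : ℕ | ∃ c : ℂ, Tendsto (fun w => (w - z) ^ n * f w) (𝓝[≠] z) (𝓝 c)} =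
      {n : ℕ | 0 ≤ (n : WithTop ℤ) + meromorphicOrderAt f z} := by
    ext n
    have hmer : MeromorphicAt (fun w : ℂ => (w - z) ^ n) z := by fun_prop
    have h2 : meromorphicOrderAt (fun w : ℂ => (w - z) ^ n) z = n :=
      (meromorphicOrderAt_eq_int_iff (n := (n : ℤ)) hmer).2
        ⟨fun _ => 1, analyticAt_const, one_ne_zero, by simp⟩
    rw [Set.mem_ofPred_eq, Set.mem_ofPred_eq, ← h2, ← meromorphicOrderAt_mul hmer (hf z),
      ← tendsto_nhds_iff_meromorphicOrderAt_nonneg (hmer.mul (hf z))]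
    rfl
  rw [locallyFinsuppWithin.negPart_apply, divisor_apply hfO (Set.mem_univ z), poleMult, hset]
  cases meromorphicOrderAt f z with
  | top =>
    have : {n : ℕ | 0 ≤ (n : WithTop ℤ) + (⊤ : WithTop ℤ)} = Set.univ := by ext n; simp
    rw [this]
    simp
  | coe m =>
    have : {n : ℕ | 0 ≤ (n : WithTop ℤ) + ((m : ℤ) : WithTop ℤ)} = Set.Ici (-m).toNat := by
      ext n
      have : (n : WithTop ℤ) + ((m : ℤ) : WithTop ℤ) = (((n : ℤ) + m : ℤ) : WithTop ℤ) := by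
        push_cast; rfl
      rw [Set.mem_ofPred_eq, this, Set.mem_Ici]
      norm_cast
      omega
    rw [this, csInf_Ici, negPart_def]
    simp

lemma proximityM_eq (f : ℂ → ℂ) (r : ℝ) : proximityM f r = proximity f ⊤ r := by
  rw [proximity_top, Real.circleAverage_def, proximityM, smul_eq_mul]
  simp [circleMap, logPlus, Real.posLog_def]

/-- The weight `log (r / x)` for `x ≤ r`, and `0` for `x > r`. Since `Real.log 0 = 0`, at `x = 0`
it is `log r`, which is the weight of a pole at the origin in the counting function. -/
noncomputable def logWeight (r x : ℝ) : ℝ := if x ≤ r then Real.log r - Real.log x else 0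

lemma logCounting_eq_sum (D : locallyFinsupp ℂ ℤ) {r : ℝ} (hr : 0 < r) (S : Finset ℂ)
    (hS : ∀ z, ‖z‖ ≤ r → D z ≠ 0 → z ∈ S) :
    D.logCounting r = ∑ z ∈ S, (D z : ℝ) * logWeight r ‖z‖ := by
  have h0 : ∑ᶠ z, (D.toClosedBall r z : ℝ) * Real.log (r * ‖z‖⁻¹) =
      ∑ z ∈ S, (D.toClosedBall r z : ℝ) * Real.log (r * ‖z‖⁻¹) := by
    apply finsum_eq_sum_of_support_subset
    intro z hz
    have hz1 : D.toClosedBall r z ≠ 0 := by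
      intro h; simp [h] at hz
    have hz2 := locallyFinsuppWithin.toClosedBall_support_subset_closedBall D hz1
    rw [locallyFinsuppWithin.toClosedBall_eval_within _ hz2] at hz1
    refine hS z ?_ hz1
    simpa [abs_of_pos hr] using hz2
  have h1 : (D 0 : ℝ) * Real.log r = ∑ z ∈ S, if z = 0 then (D 0 : ℝ) * Real.log r else 0 := by
    rw [Finset.sum_ite_eq']
    split_ifs with h
    · rfl
    · have : D 0 = 0 := by
        by_contra h2; exact h (hS 0 (by simpa using hr.le) h2)
      simp [this]
  change ∑ᶠ z, (D.toClosedBall r z : ℝ) * Real.log (r * ‖z‖⁻¹) + (D 0 : ℝ) * Real.log r = _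
  rw [h0, h1, ← Finset.sum_add_distrib]
  refine Finset.sum_congr rfl fun z _ => ?_
  by_cases hz : ‖z‖ ≤ r
  · rw [locallyFinsuppWithin.toClosedBall_eval_within _ (by simpa [abs_of_pos hr] using hz),
      logWeight, if_pos hz]
    by_cases h : z = 0
    · simp [h]
    · rw [if_neg h, Real.log_mul hr.ne' (by simpa using h), Real.log_inv]; ring
  · have h : z ≠ 0 := by rintro rfl; simp at hz; linarith
    rw [locallyFinsuppWithin.apply_eq_zero_of_notMem _ (by simpa [abs_of_pos hr] using hz),
      logWeight, if_neg hz, if_neg h]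
    simp

lemma finite_support_ball (D : locallyFinsupp ℂ ℤ) (r : ℝ) :
    {z : ℂ | ‖z‖ ≤ r ∧ D z ≠ 0}.Finite := by
  refine ((D.toClosedBall r).finiteSupport (isCompact_closedBall 0 |r|)).subset ?_
  rintro z ⟨hz, hz'⟩
  have : z ∈ Metric.closedBall (0:ℂ) |r| := by
    simpa using hz.trans (le_abs_self r)
  rw [Function.mem_support, locallyFinsuppWithin.toClosedBall_eval_within _ this]
  exact hz'

/-- The contribution of a single pole of modulus `x` to the integral defining `N(r, f)`. -/
lemma integral_indicator_div {r x : ℝ} (hr : 0 < r) (hx : 0 < x) :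
    IntervalIntegrable (fun t : ℝ => (if x ≤ t then (1:ℝ) else 0) / t) volume 0 r ∧
    ∫ t in (0:ℝ)..r, (if x ≤ t then (1:ℝ) else 0) / t = logWeight r x := by
  have hfun : (fun t : ℝ => (if x ≤ t then (1:ℝ) else 0) / t) =
      Set.indicator (Set.Ici x) (fun t => t⁻¹) := by
    ext t; by_cases h : x ≤ t <;> simp [h]
  rw [hfun]
  have hint : IntegrableOn (fun t : ℝ => t⁻¹) (Set.Icc x r) := by
    apply ContinuousOn.integrableOn_Icc
    apply ContinuousOn.inv₀ continuousOn_id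
    intro t ht; exact (hx.trans_le ht.1).ne'
  have hinter : Set.Ioc 0 r ∩ Set.Ici x = Set.Icc x r := by
    ext t; simp only [Set.mem_inter_iff, Set.mem_Ioc, Set.mem_Ici, Set.mem_Icc]
    constructor
    · rintro ⟨⟨_, h⟩, h'⟩; exact ⟨h', h⟩
    · rintro ⟨h, h'⟩; exact ⟨⟨hx.trans_le h, h'⟩, h⟩
  constructor
  · rw [intervalIntegrable_iff_integrableOn_Ioc_of_le hr.le, IntegrableOn,
      integrable_indicator_iff measurableSet_Ici, IntegrableOn,
      Measure.restrict_restrict measurableSet_Ici, Set.inter_comm, hinter]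
    exact hint
  · rw [intervalIntegral.integral_of_le hr.le, setIntegral_indicator measurableSet_Ici, hinter,
      logWeight]
    split_ifs with h
    · rw [integral_Icc_eq_integral_Ioc, ← intervalIntegral.integral_of_le h,
        integral_inv_of_pos hx hr, Real.log_div hr.ne' hx.ne']
    · rw [Set.Icc_eq_empty h]; simp

lemma countingN_eq {f : ℂ → ℂ} (hf : Meromorphic f) {r : ℝ} (hr : 0 < r) :
    countingN f r = logCounting f ⊤ r := by
  classical
  set D := (divisor f Set.univ)⁻ with hD
  have hfin := finite_support_ball D r
  set S := hfin.toFinset with hSdef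
  have hS : ∀ z, ‖z‖ ≤ r → D z ≠ 0 → z ∈ S := fun z h1 h2 => by
    simp [hSdef, h1, h2]
  have hcast : ∀ z, (poleMult f z : ℝ) = (D z : ℝ) := fun z => by
    rw [← poleMult_eq hf z]; simp
  have hcount : ∀ t ≤ r, poleCount f t = ∑ z ∈ S, if ‖z‖ ≤ t then (D z : ℝ) else 0 := by
    intro t ht
    rw [poleCount, tsum_eq_sum (s := S)]
    · refine Finset.sum_congr rfl fun z _ => ?_
      simp only [Set.indicator, Metric.mem_closedBall, dist_zero_right, hcast]
    · intro z hz
      simp only [Set.indicator, Metric.mem_closedBall, dist_zero_right, hcast]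
      split_ifs with h
      · by_contra h2
        exact hz (hS z (h.trans ht) (by simpa using h2))
      · rfl
  have h0 : poleCount f 0 = ∑ z ∈ S, if z = 0 then (D z : ℝ) else 0 := by
    rw [hcount 0 hr.le]; simp
  rw [logCounting_top, ← hD, logCounting_eq_sum D hr S hS, countingN]
  have hint : ∀ t ∈ Set.uIcc 0 r, (poleCount f t - poleCount f 0) / t =
      ∑ z ∈ S.filter (· ≠ 0), (D z : ℝ) * ((if ‖z‖ ≤ t then (1:ℝ) else 0) / t) := by
    intro t ht
    rw [Set.uIcc_of_le hr.le] at ht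
    rw [hcount t ht.2, h0, ← Finset.sum_sub_distrib, Finset.sum_div, Finset.sum_filter]
    refine Finset.sum_congr rfl fun z _ => ?_
    by_cases hz : z = 0
    · simp [hz, ht.1]
    · by_cases h : ‖z‖ ≤ t <;> simp [hz, h, div_eq_mul_inv]
  rw [intervalIntegral.integral_congr hint, intervalIntegral.integral_finsetSum, h0,
    Finset.sum_filter, Finset.sum_mul, ← Finset.sum_add_distrib]
  · refine Finset.sum_congr rfl fun z _ => ?_
    by_cases hz : z = 0
    · simp [hz, logWeight, hr.le]
    · rw [intervalIntegral.integral_const_mul, (integral_indicator_div hr (norm_pos_iff.2 hz)).2]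
      simp [hz]
  · intro z hz
    exact (integral_indicator_div hr (norm_pos_iff.2 (Finset.mem_filter.1 hz).2)).1.const_mul _

lemma charT_eq {f : ℂ → ℂ} (hf : Meromorphic f) {r : ℝ} (hr : 0 < r) :
    charT f r = characteristic f ⊤ r := by
  rw [charT, proximityM_eq, countingN_eq hf hr]; rfl

/-! ### Counting functions and characteristics under translation -/

/-- Bernoulli's inequality with exponent `1 + h / R` gives
`r / x ≤ ((r + h) / (x + h)) ^ (1 + h / R)`; this is its logarithm. -/
lemma log_sub_log_le {R h x r : ℝ} (hR : 0 < R) (hh : 0 ≤ h) (hx : R ≤ x) (hr : x ≤ r) :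
    Real.log r - Real.log x ≤ (1 + h / R) * (Real.log (r + h) - Real.log (x + h)) := by
  have hx0 : 0 < x := hR.trans_le hx
  have hr0 : 0 < r := hx0.trans_le hr
  have hδ : 0 ≤ (r - x) / (x + h) := div_nonneg (by linarith) (by linarith)
  have hp : 1 ≤ 1 + h / R := by have := div_nonneg hh hR.le; linarith
  have hB := one_add_mul_self_le_rpow_one_add (by linarith : -1 ≤ (r - x) / (x + h)) hp
  have e1 : 1 + (r - x) / (x + h) = (r + h) / (x + h) := by
    field_simp; ring
  have e2 : r / x ≤ 1 + (1 + h / R) * ((r - x) / (x + h)) := by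
    rw [← sub_nonneg]
    have : 1 + (1 + h / R) * ((r - x) / (x + h)) - r / x =
        (r - x) * (h * (x - R)) / (R * x * (x + h)) := by
      field_simp; ring
    rw [this]
    apply div_nonneg
    · exact mul_nonneg (by linarith) (mul_nonneg hh (by linarith))
    · positivity
  rw [e1] at hB
  have h3 := Real.log_le_log (by positivity) (e2.trans hB)
  rwa [Real.log_rpow (by positivity), Real.log_div hr0.ne' hx0.ne',
    Real.log_div (by positivity) (by positivity)] at h3

lemma logWeight_nonneg {r x : ℝ} (hr : 1 ≤ r) (hx : 0 ≤ x) : 0 ≤ logWeight r x := by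
  rw [logWeight]
  split_ifs with h
  · rcases hx.eq_or_lt with rfl | hx'
    · simpa using Real.log_nonneg hr
    · linarith [Real.log_le_log hx' h]
  · rfl

/-- The contribution of a point of modulus `x` at radius `r` is controlled by that of its translate,
of modulus `y ≤ x + h`, at radius `r + h`. The factor `1 + h / R` is close to `1` for large `R`, and
the correction `logWeight R x` does not depend on `r`. -/
lemma logWeight_shift_le {R h r x y : ℝ} (hR : 1 ≤ R) (hh : 0 ≤ h) (hr : R ≤ r)
    (hx : 0 ≤ x) (hy : 0 ≤ y) (hyx : y ≤ x + h) :
    logWeight r x ≤ (1 + h / R) * logWeight (r + h) y + logWeight R x := by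
  have hR0 : 0 < R := by linarith
  have hc : 0 ≤ 1 + h / R := by positivity
  have n1 := mul_nonneg hc (logWeight_nonneg (r := r + h) (by linarith) hy)
  have n2 := logWeight_nonneg hR hx
  -- `max x R` treats the points inside and outside the disc of radius `R` together
  by_cases hxr : x ≤ r
  · have hm : R ≤ max x R := le_max_right _ _
    have key := log_sub_log_le hR0 hh hm (max_le hxr hr)
    have hw : Real.log (r + h) - Real.log (max x R + h) ≤ logWeight (r + h) y := by
      rw [logWeight, if_pos (by linarith)]
      have : Real.log y ≤ Real.log (max x R + h) := by
        rcases hy.eq_or_lt with rfl | hy'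
        · simpa using Real.log_nonneg (by linarith : (1:ℝ) ≤ max x R + h)
        · exact Real.log_le_log hy' (hyx.trans (by linarith [le_max_left x R]))
      linarith
    have key2 := key.trans (mul_le_mul_of_nonneg_left hw hc)
    rw [logWeight, if_pos hxr]
    rcases le_total x R with hxR | hxR
    · rw [max_eq_right hxR] at key2
      rw [logWeight.eq_1 R x, if_pos hxR]
      linarith
    · rw [max_eq_left hxR] at key2
      linarith
  · rw [logWeight, if_neg hxr]
    linarith

/-- Comparison of the counting function of a translated divisor with that of the divisor itself,
obtained termwise from `logWeight_shift_le`. -/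
lemma logCounting_shift_le (D D' : locallyFinsupp ℂ ℤ) (hD : ∀ z, 0 ≤ D z) {η : ℂ}
    (hDD' : ∀ w, D' w = D (w + η)) {R r : ℝ} (hR : 1 ≤ R) (hr : R ≤ r) :
    D'.logCounting r ≤ (1 + ‖η‖ / R) * D.logCounting (r + ‖η‖) + D'.logCounting R := by
  classical
  set S := ((finite_support_ball D' r).union
    ((finite_support_ball D (r + ‖η‖)).image (· - η))).toFinset with hS
  have h1 := logCounting_eq_sum D' (by linarith : 0 < r) S
    (fun z a b => by simp [hS, a, b])
  have h2 := logCounting_eq_sum D' (by linarith : 0 < R) S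
    (fun z a b => by simp [hS, a.trans hr, b])
  have h3 := logCounting_eq_sum D (by linarith [norm_nonneg η] : 0 < r + ‖η‖) (S.image (· + η))
    (fun z a b => by
      rw [Finset.mem_image]
      refine ⟨z - η, ?_, by simp⟩
      rw [hS, Set.Finite.mem_toFinset]
      exact Or.inr ⟨z, ⟨a, b⟩, rfl⟩)
  rw [Finset.sum_image (fun a _ b _ h => add_right_cancel h)] at h3
  rw [h1, h2, h3, Finset.mul_sum, ← Finset.sum_add_distrib]
  refine Finset.sum_le_sum fun w _ => ?_
  have := logWeight_shift_le hR (norm_nonneg η) hr (norm_nonneg w) (norm_nonneg (w + η))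
    (norm_add_le w η)
  have hn : (0:ℝ) ≤ D (w + η) := by exact_mod_cast hD _
  rw [hDD' w]
  nlinarith [mul_le_mul_of_nonneg_left this hn]

lemma meromorphic_shift {f : ℂ → ℂ} (hf : Meromorphic f) (η : ℂ) :
    Meromorphic (fun z => f (z + η)) :=
  fun z => meromorphicAt_comp_add_const_iff_meromorphicAt.2 (hf (z + η))

lemma logCounting_shift_value_le {f : ℂ → ℂ} (hf : Meromorphic f) (η a : ℂ) {R r : ℝ}
    (hR : 1 ≤ R) (hr : R ≤ r) :
    logCounting (fun z => f (z + η)) a r ≤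
      (1 + ‖η‖ / R) * logCounting f a (r + ‖η‖) + logCounting (fun z => f (z + η)) a R := by
  rw [logCounting_coe, logCounting_coe]
  refine logCounting_shift_le _ _ (fun z => ?_) (fun w => ?_) hR hr
  · rw [locallyFinsuppWithin.posPart_apply]; positivity
  · have h1 : Meromorphic (fun z => f z - a) := fun z => (hf z).sub (MeromorphicAt.const a z)
    have h2 := meromorphic_shift h1 η
    rw [locallyFinsuppWithin.posPart_apply, locallyFinsuppWithin.posPart_apply,
      divisor_apply (meromorphicOn_univ.2 h1) (Set.mem_univ _),
      divisor_apply (meromorphicOn_univ.2 h2) (Set.mem_univ _),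
      ← meromorphicOrderAt_comp_add_const_eq_meromorphicOrderAt]
    rfl

/-- Averaging `logCounting_shift_value_le` over the unit circle, Cartan's formula turns it into
a comparison of characteristics. -/
lemma characteristic_shift_le {f : ℂ → ℂ} (hf : Meromorphic f) (η : ℂ) {R : ℝ} (hR : 1 ≤ R) :
    ∃ C, ∀ r, R ≤ r → characteristic (fun z => f (z + η)) ⊤ r ≤
      (1 + ‖η‖ / R) * characteristic f ⊤ (r + ‖η‖) + C := by
  have hg := meromorphic_shift hf η
  obtain ⟨c, hc⟩ := characteristic_top_eq_circleAverage_add_const hf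
  obtain ⟨d, hd⟩ := characteristic_top_eq_circleAverage_add_const hg
  refine ⟨characteristic (fun z => f (z + η)) ⊤ R - (1 + ‖η‖ / R) * c, fun r hr => ?_⟩
  have hrη : 0 < r + ‖η‖ := by have := norm_nonneg η; linarith
  have hi1 : CircleIntegrable (fun a : ℂ => (1 + ‖η‖ / R) • logCounting f a (r + ‖η‖)) 0 1 :=
    (circleIntegrable_logCounting hf).const_smul
  have hi2 : CircleIntegrable (fun a : ℂ => logCounting (fun z => f (z + η)) a R) 0 1 :=
    circleIntegrable_logCounting hg
  have key := Real.circleAverage_mono (circleIntegrable_logCounting hg (R := r))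
    (hi1.add hi2) (fun a _ => logCounting_shift_value_le hf η a hR hr)
  rw [Real.circleAverage_add hi1 hi2, Real.circleAverage_fun_smul, smul_eq_mul] at key
  rw [hd r (by linarith), hd R (by linarith), hc _ hrη.ne']
  linarith

/-! ### Unboundedness of the characteristic -/

/-- The characteristic of a meromorphic function tends to infinity, unless the function is constant
outside a discrete set (expressed as `f - c` having infinite order everywhere). If the
characteristic is bounded, the First Main Theorem leaves no zeros of finite order to any `f - a`;
taking for `a` the value of `f` at a regular point, `f - a` vanishes identically near it. -/
lemma tendsto_characteristic_or_const {f : ℂ → ℂ} (hf : Meromorphic f) :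
    Tendsto (characteristic f ⊤) atTop atTop ∨
      ∃ c : ℂ, ∀ w, meromorphicOrderAt (fun z => f z - c) w = ⊤ := by
  by_contra! hcon
  obtain ⟨hT, hne⟩ := hcon
  -- by monotonicity, the characteristic is bounded
  have hmono := characteristic_monotoneOn hf
  obtain ⟨B, hB⟩ : ∃ B, ∀ r, 1 ≤ r → characteristic f ⊤ r ≤ B := by
    by_contra! hB
    apply hT
    rw [tendsto_atTop]
    intro b
    obtain ⟨r, hr, hbr⟩ := hB b
    filter_upwards [eventually_ge_atTop r] with s hs
    exact hbr.le.trans (hmono (by simp; linarith) (by simp; linarith) hs)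
  -- hence so are all counting functions, and no value has a nonzero divisor
  have hdiv : ∀ a : ℂ, (divisor (fun z => f z - a) Set.univ)⁺ = 0 := by
    intro a
    rw [locallyFinsuppWithin.zero_iff_logCounting_bounded (posPart_nonneg _),
      Asymptotics.isBigO_iff]
    have ha : Meromorphic (fun z => f z - a) := fun z => (hf z).sub (MeromorphicAt.const a z)
    refine ⟨B + (Real.posLog ‖a‖ + Real.log 2) + max |Real.log ‖f 0 - a‖|
      |Real.log ‖meromorphicTrailingCoeffAt (fun z => f z - a) 0‖|, ?_⟩
    filter_upwards [eventually_ge_atTop 1] with r hr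
    have b1 := abs_le.1 (abs_characteristic_sub_characteristic_shift_le (a₀ := a) (r := r) hf)
    have b2 := abs_le.1 (characteristic_sub_characteristic_inv_le (R := r) ha)
    have b3 : characteristic (fun z => f z - a)⁻¹ ⊤ r = proximity (fun z => f z - a)⁻¹ ⊤ r +
      logCounting (fun z => f z - a)⁻¹ ⊤ r := rfl
    rw [logCounting_inv, logCounting_zero] at b3
    have b4 := proximity_nonneg (f := (fun z => f z - a)⁻¹) (a := ⊤) r
    have b5 := hB r hr
    have b6 := locallyFinsuppWithin.logCounting_nonneg
      (posPart_nonneg (divisor (fun z => f z - a) Set.univ)) hr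
    rw [Real.norm_of_nonneg b6]
    simp only [Pi.one_apply, norm_one, mul_one]
    simp only [Pi.zero_apply] at b4
    linarith [b1.1, b1.2, b2.1, b2.2]
  -- pick a regular point
  obtain ⟨z, hz⟩ : ∃ z, AnalyticAt ℂ f z := by
    have := (hf 0).eventually_analyticAt
    exact this.exists
  have hord : 0 < meromorphicOrderAt (fun w => f w - f z) z := by
    have han : AnalyticAt ℂ (fun w => f w - f z) z := hz.sub analyticAt_const
    rw [← tendsto_zero_iff_meromorphicOrderAt_pos han.meromorphicAt]
    have := han.continuousAt.tendsto
    simp only [sub_self] at this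
    exact this.mono_left nhdsWithin_le_nhds
  have ha : Meromorphic (fun w => f w - f z) :=
    fun w => (hf w).sub (MeromorphicAt.const (f z) w)
  have htop : meromorphicOrderAt (fun w => f w - f z) z = ⊤ := by
    have h0 := congrArg (fun D => D z) (hdiv (f z))
    simp only [locallyFinsuppWithin.posPart_apply,
      divisor_apply (meromorphicOn_univ.2 ha) (Set.mem_univ z)] at h0
    cases h : meromorphicOrderAt (fun w => f w - f z) z with
    | top => rfl
    | coe m =>
      rw [h] at h0 hord
      norm_cast at hord
      simp at h0
      omega
  refine (hne (f z)).elim fun w hw => ?_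
  exact MeromorphicOn.meromorphicOrderAt_ne_top_of_isPreconnected
    (meromorphicOn_univ.2 ha) isPreconnected_univ (Set.mem_univ w) (Set.mem_univ z) hw htop

lemma charT_of_order_top {f : ℂ → ℂ} (hf : Meromorphic f) {c : ℂ}
    (h : ∀ w, meromorphicOrderAt (fun z => f z - c) w = ⊤) {r : ℝ} (hr : 0 < r) :
    charT f r = Real.posLog ‖c‖ := by
  have hcd : f =ᶠ[codiscrete ℂ] fun _ => c := by
    change {z | f z = c} ∈ codiscrete ℂ
    rw [mem_codiscrete]
    intro w
    rw [disjoint_principal_right, compl_compl]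
    filter_upwards [meromorphicOrderAt_eq_top_iff.1 (h w)] with z hz
    exact sub_eq_zero.1 hz
  rw [charT_eq hf hr, characteristic_congr_codiscrete hcd hr.ne']
  simp [characteristic]

/-! ### A growth lemma -/

/-- With `d k = 1 / u k`, the series of `d k - d (k + 3)` telescopes in steps of three. -/
lemma summable_inv_sub_inv {u : ℕ → ℝ} (hu : Monotone u) (h1 : ∀ k, 1 ≤ u k) :
    Summable (fun k => (u k)⁻¹ - (u (k + 3))⁻¹) := by
  have hpos : ∀ k, 0 < u k := fun k => by linarith [h1 k]
  refine summable_of_sum_range_le (c := (u 0)⁻¹ + (u 1)⁻¹ + (u 2)⁻¹) (fun k => ?_) (fun n => ?_)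
  · have := inv_anti₀ (hpos k) (hu (show k ≤ k + 3 by omega))
    linarith
  · have key : ∑ i ∈ Finset.range n, ((u i)⁻¹ - (u (i + 3))⁻¹) =
        (u 0)⁻¹ + (u 1)⁻¹ + (u 2)⁻¹ - (u n)⁻¹ - (u (n + 1))⁻¹ - (u (n + 2))⁻¹ := by
      induction n with
      | zero => simp only [Finset.range_zero, Finset.sum_empty]; ring
      | succ n ih => rw [Finset.sum_range_succ, ih]; ring
    rw [key]
    have := inv_pos.2 (hpos n)
    have := inv_pos.2 (hpos (n + 1))
    have := inv_pos.2 (hpos (n + 2))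
    linarith

/-- A jump `v - u > 1 / v` can be paid for by the decrement of the reciprocal, because
`v⁻³ < v⁻² (v - u) ≤ u⁻¹ - v⁻¹`. -/
lemma inv_le_inv_sub_inv {u v m : ℝ} (hu : 0 < u) (huv : u ≤ v) (hm : v ^ 3 ≤ m)
    (hjump : v⁻¹ < v - u) : m⁻¹ ≤ u⁻¹ - v⁻¹ := by
  have hv : 0 < v := hu.trans_le huv
  calc m⁻¹ ≤ (v ^ 3)⁻¹ := inv_anti₀ (by positivity) hm
    _ = v⁻¹ / v ^ 2 := by field_simp
    _ ≤ (v - u) / v ^ 2 := by gcongr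
    _ ≤ (v - u) / (u * v) := by
        apply div_le_div_of_nonneg_left (by linarith) (by positivity)
        nlinarith
    _ = u⁻¹ - v⁻¹ := by field_simp

/-- Growth lemma of Borel type: a nondecreasing unbounded function of finite order satisfies
`T(r + h) / T(r - h) → 1` outside a set of finite logarithmic measure. With `u k` the value of
`log T` at `(N + k) h`, the exceptional set consists of those intervals of length `h` across whose
neighbourhood `u` jumps by more than `1 / u (k + 3)`; finite order bounds the cube of `u` by `N + k`
up to a constant, so that the logarithmic measures of these intervals have a convergent sum. -/
lemma growth_lemma {T : ℝ → ℝ} (hmono : MonotoneOn T (Set.Ioi 0)) (hT : Tendsto T atTop atTop)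
    {K : ℝ} (hK : ∀ᶠ r in atTop, Real.log (T r) ≤ K * Real.log r) {h : ℝ} (hh : 0 < h) :
    ∃ E : Set ℝ, FiniteLogMeasure E ∧
      Tendsto (fun r => T (r + h) / T (r - h)) (atTop ⊓ 𝓟 Eᶜ) (𝓝 1) := by
  -- the cube of the logarithm of `T` is eventually below `r / (4 h)`
  have hcube : ∀ᶠ r in atTop, Real.log (T r) ^ 3 ≤ r / (4 * h) := by
    have hlo := (Real.isLittleO_pow_log_id_atTop (n := 3)).bound
      (show (0:ℝ) < 1 / (4 * h * (|K| + 1) ^ 3) by positivity)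
    filter_upwards [hlo, hK, eventually_ge_atTop 1, hT.eventually_ge_atTop 1] with r h1 h2 h3 h4
    have hl : 0 ≤ Real.log r := Real.log_nonneg h3
    have hlT : 0 ≤ Real.log (T r) := Real.log_nonneg h4
    rw [Real.norm_of_nonneg (by positivity), id_eq, Real.norm_of_nonneg (by linarith)] at h1
    have h5 : Real.log (T r) ≤ (|K| + 1) * Real.log r :=
      h2.trans (mul_le_mul_of_nonneg_right (by linarith [le_abs_self K]) hl)
    calc Real.log (T r) ^ 3 ≤ ((|K| + 1) * Real.log r) ^ 3 := by gcongr
      _ = (|K| + 1) ^ 3 * Real.log r ^ 3 := by ring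
      _ ≤ (|K| + 1) ^ 3 * (1 / (4 * h * (|K| + 1) ^ 3) * r) := by gcongr
      _ = r / (4 * h) := by field_simp
  obtain ⟨R, hR⟩ := eventually_atTop.1
    ((hcube.and (hT.eventually_ge_atTop (Real.exp 1))).and (eventually_ge_atTop 1))
  obtain ⟨N, hN⟩ := exists_nat_ge (R / h)
  have hNR : R ≤ N * h := by rwa [div_le_iff₀ hh] at hN
  have hR1 : 1 ≤ R := (hR R le_rfl).2
  have hge : ∀ r, R ≤ r → Real.exp 1 ≤ T r := fun r hr => (hR r hr).1.2
  have hTpos : ∀ r, R ≤ r → 0 < T r := fun r hr => (Real.exp_pos 1).trans_le (hge r hr)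
  have hmono' : ∀ r s, R ≤ r → r ≤ s → T r ≤ T s := fun r s hr hrs =>
    hmono (by simp; linarith) (by simp; linarith) hrs
  have hpt : ∀ k : ℕ, R ≤ (N + k : ℝ) * h := fun k => by
    have : 0 ≤ (k : ℝ) * h := by positivity
    nlinarith
  set u : ℕ → ℝ := fun k => Real.log (T ((N + k : ℝ) * h)) with hu
  have hu1 : ∀ k, 1 ≤ u k := fun k => by
    rw [hu, Real.le_log_iff_exp_le (hTpos _ (hpt k))]; exact hge _ (hpt k)
  have humono : Monotone u := by
    intro k l hkl
    apply Real.log_le_log (hTpos _ (hpt k))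
    apply hmono' _ _ (hpt k)
    have : (k : ℝ) ≤ l := by exact_mod_cast hkl
    gcongr
  have hu3 : ∀ k, u (k + 3) ^ 3 ≤ (N + k + 1 : ℝ) := by
    intro k
    refine ((hR _ (hpt (k + 3))).1.1).trans ?_
    rw [div_le_iff₀ (by positivity)]
    push_cast
    have : (0:ℝ) ≤ N + k := by positivity
    nlinarith
  set I : ℕ → Set ℝ := fun k => if (u (k + 3))⁻¹ < u (k + 3) - u k
    then Set.Ico ((N + k + 1 : ℝ) * h) ((N + k + 2 : ℝ) * h) else ∅ with hI
  refine ⟨⋃ k, I k, ⟨MeasurableSet.iUnion fun k => ?_, Set.iUnion_subset fun k => ?_, ?_⟩, ?_⟩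
  · simp only [hI]; split_ifs
    · exact measurableSet_Ico
    · exact MeasurableSet.empty
  · simp only [hI]; split_ifs
    · intro t ht
      have := hpt k
      simp only [Set.mem_Ici]
      nlinarith [ht.1]
    · exact Set.empty_subset _
  · refine (lintegral_iUnion_le _ _).trans_lt ?_
    refine lt_of_le_of_lt (ENNReal.tsum_le_tsum fun k => ?_)
      (summable_inv_sub_inv humono hu1).tsum_ofReal_lt_top
    simp only [hI]; split_ifs with hk
    · have hm : (0:ℝ) < N + k + 1 := by positivity
      calc ∫⁻ t in Set.Ico ((N + k + 1 : ℝ) * h) ((N + k + 2 : ℝ) * h), ENNReal.ofReal t⁻¹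
          ≤ ∫⁻ t in Set.Ico ((N + k + 1 : ℝ) * h) ((N + k + 2 : ℝ) * h),
              ENNReal.ofReal ((N + k + 1 : ℝ) * h)⁻¹ := by
            refine setLIntegral_mono measurable_const fun t ht => ?_
            exact ENNReal.ofReal_le_ofReal (inv_anti₀ (by positivity) ht.1)
        _ = ENNReal.ofReal ((N + k + 1 : ℝ)⁻¹) := by
            rw [setLIntegral_const, Real.volume_Ico, ← ENNReal.ofReal_mul (by positivity)]
            congr 1
            field_simp
            ring
        _ ≤ _ := ENNReal.ofReal_le_ofReal (inv_le_inv_sub_inv (by linarith [hu1 k])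
            (humono (by omega)) (hu3 k) hk)
    · simp
  · have hlim : Tendsto (fun r => Real.exp (Real.log (T r))⁻¹) (atTop ⊓ 𝓟 (⋃ k, I k)ᶜ) (𝓝 1) := by
      have h1 := (tendsto_inv_atTop_zero.comp (Real.tendsto_log_atTop.comp hT))
      have h2 := (Real.continuous_exp.tendsto 0).comp h1
      rw [Real.exp_zero] at h2
      exact h2.mono_left inf_le_left
    have hlarge : ∀ᶠ r in atTop ⊓ 𝓟 (⋃ k, I k)ᶜ, (N + 1 : ℝ) * h ≤ r :=
      (eventually_ge_atTop _).filter_mono inf_le_left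
    have hout : ∀ᶠ r in atTop ⊓ 𝓟 (⋃ k, I k)ᶜ, r ∈ (⋃ k, I k)ᶜ :=
      (eventually_principal.2 fun _ hx => hx).filter_mono inf_le_right
    refine tendsto_of_tendsto_of_tendsto_of_le_of_le' tendsto_const_nhds hlim ?_ ?_
    · filter_upwards [hlarge] with r hr
      have hrR : R ≤ r - h := by nlinarith
      rw [one_le_div (hTpos _ hrR)]
      exact hmono' _ _ hrR (by linarith)
    · filter_upwards [hlarge, hout] with r hr hrE
      obtain ⟨k, hk⟩ : ∃ k : ℕ, ⌊r / h⌋₊ = N + 1 + k := by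
        apply Nat.exists_eq_add_of_le
        apply Nat.le_floor
        rw [le_div_iff₀ hh]
        exact_mod_cast hr
      have hr0 : 0 ≤ r / h := by
        apply div_nonneg _ hh.le
        have : (0:ℝ) ≤ (N + 1) * h := by positivity
        linarith
      have hk1 := Nat.floor_le hr0
      have hk2 := Nat.lt_floor_add_one (r / h)
      rw [hk] at hk1 hk2
      push_cast at hk1 hk2
      rw [le_div_iff₀ hh] at hk1
      rw [div_lt_iff₀ hh] at hk2
      have hnb : ¬ ((u (k + 3))⁻¹ < u (k + 3) - u k) := by
        intro hb
        apply hrE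
        rw [Set.mem_iUnion]
        refine ⟨k, ?_⟩
        simp only [hI, if_pos hb]
        constructor <;> linarith
      push Not at hnb
      have hrR : R ≤ r - h := by nlinarith
      have p1 : u k ≤ Real.log (T (r - h)) :=
        Real.log_le_log (hTpos _ (hpt k)) (hmono' _ _ (hpt k) (by linarith))
      have p2 : Real.log (T (r + h)) ≤ u (k + 3) :=
        Real.log_le_log (hTpos _ (by linarith)) (hmono' _ _ (by linarith) (by push_cast; linarith))
      have p3 : Real.log (T r) ≤ Real.log (T (r + h)) :=
        Real.log_le_log (hTpos _ (by linarith)) (hmono' _ _ (by linarith) (by linarith))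
      have p4 : 0 < Real.log (T r) :=
        lt_of_lt_of_le one_pos ((Real.le_log_iff_exp_le (hTpos _ (by linarith))).2
          (hge _ (by linarith)))
      have p5 : (u (k + 3))⁻¹ ≤ (Real.log (T r))⁻¹ := inv_anti₀ p4 (p3.trans p2)
      rw [← Real.log_le_iff_le_exp (div_pos (hTpos _ (by linarith)) (hTpos _ hrR)),
        Real.log_div (hTpos _ (by linarith)).ne' (hTpos _ hrR).ne']
      linarith

/-- Finite order in the form needed by `growth_lemma`. -/
lemma log_charT_le {f : ℂ → ℂ} (horder : growthOrder f < ⊤) :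
    ∃ K : ℝ, ∀ᶠ r in atTop, Real.log (charT f r) ≤ K * Real.log r := by
  obtain ⟨K, hK1, _⟩ := EReal.lt_iff_exists_real_btwn.1 horder
  refine ⟨K, ?_⟩
  filter_upwards [eventually_lt_of_limsup_lt hK1, eventually_gt_atTop 1] with r h1 h2
  rw [EReal.coe_lt_coe_iff, div_lt_iff₀ (Real.log_pos h2)] at h1
  exact (le_max_right _ _).trans h1.le

/-! ### The characteristic of a translate -/

/-- **Lemma 2.4 (Halburd–Korhonen, Chiang–Feng).** For a non-constant meromorphic
function `f` of finite order and `η ≠ 0`, one has `T(r, f(z+η)) = T(r, f) + S(r, f)`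
outside a set of finite logarithmic measure. -/
theorem charT_shift_eq_charT_add_small
    (f : ℂ → ℂ) (hf : MeromorphicOn f Set.univ) (hnc : ¬∃ c : ℂ, ∀ z : ℂ, f z = c)
    (horder : growthOrder f < ⊤) (η : ℂ) (hη : η ≠ 0) :
    ∃ E : Set ℝ, FiniteLogMeasure E ∧
      Filter.Tendsto
        (fun r : ℝ => (charT (fun z => f (z + η)) r - charT f r) / charT f r)
        (Filter.atTop ⊓ Filter.principal Eᶜ) (𝓝 0) := by
  have hf' : Meromorphic f := meromorphicOn_univ.1 hf
  have hg' := meromorphic_shift hf' η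
  rcases tendsto_characteristic_or_const hf' with hT | ⟨c, hc⟩
  swap
  -- `f` may still differ from a constant on a discrete set; both characteristics are then equal
  · refine ⟨∅, ⟨MeasurableSet.empty, Set.empty_subset _, by simp⟩, ?_⟩
    have hc' : ∀ w, meromorphicOrderAt (fun z => f (z + η) - c) w = ⊤ := fun w =>
      (meromorphicOrderAt_comp_add_const_eq_meromorphicOrderAt
        (f := fun z => f z - c) (c := η) (x := w)).trans (hc (w + η))
    refine tendsto_const_nhds.congr' ?_
    filter_upwards [(eventually_gt_atTop (0:ℝ)).filter_mono inf_le_left] with r hr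
    rw [charT_of_order_top hf' hc hr, charT_of_order_top hg' hc' hr]
    simp
  obtain ⟨K, hK⟩ := log_charT_le horder
  have hK' : ∀ᶠ r in atTop, Real.log (characteristic f ⊤ r) ≤ K * Real.log r := by
    filter_upwards [hK, eventually_gt_atTop 0] with r h1 h2
    rwa [charT_eq hf' h2] at h1
  have hmono := characteristic_monotoneOn hf'
  have hh : 0 < ‖η‖ := norm_pos_iff.2 hη
  obtain ⟨E, hE, hratio⟩ := growth_lemma hmono hT hK' hh
  refine ⟨E, hE, ?_⟩
  set F := atTop ⊓ 𝓟 Eᶜ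
  set T := characteristic f ⊤ with hTdef
  set S := characteristic (fun z => f (z + η)) ⊤ with hSdef
  set h := ‖η‖ with hhdef
  have hF : ∀ {p : ℝ → Prop}, (∀ᶠ r in atTop, p r) → ∀ᶠ r in F, p r :=
    fun hp => hp.filter_mono inf_le_left
  have hsmall : ∀ C : ℝ, Tendsto (fun r => C / T r) F (𝓝 0) := fun C =>
    (hT.const_div_atTop C).mono_left inf_le_left
  have hinv : Tendsto (fun r => T (r - h) / T (r + h)) F (𝓝 1) := by
    have := hratio.inv₀ one_ne_zero
    simpa using this
  -- constants `1 + h / R` arbitrarily close to `1`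
  have hR1 : Tendsto (fun R : ℝ => 1 + h / R) atTop (𝓝 1) := by
    simpa using (tendsto_id.const_div_atTop h).const_add (1:ℝ)
  have hbase : ∀ᶠ r in F, h < r ∧ 0 < T (r - h) ∧ T (r - h) ≤ T r ∧ T r ≤ T (r + h) := by
    apply hF
    have hsh : Tendsto (fun r : ℝ => r - h) atTop atTop := tendsto_atTop_add_const_right _ _ tendsto_id
    filter_upwards [eventually_gt_atTop h, (hT.comp hsh).eventually_gt_atTop 0] with r h1 h2
    refine ⟨h1, h2, hmono ?_ ?_ ?_, hmono ?_ ?_ ?_⟩ <;> simp <;> linarith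
  have hST : Tendsto (fun r => S r / T r) F (𝓝 1) := by
    rw [tendsto_order]
    constructor
    · intro a ha
      have hR2 := hR1.inv₀ one_ne_zero
      rw [inv_one] at hR2
      obtain ⟨R, hRa, hR⟩ := ((hR2.eventually_const_lt ha).and (eventually_ge_atTop 1)).exists
      obtain ⟨C, hC⟩ := characteristic_shift_le hg' (-η) hR
      simp only [neg_add_cancel_right, norm_neg] at hC
      have hc : 0 < 1 + h / R := by positivity
      have hlim : Tendsto (fun r => (1 + h / R)⁻¹ * (T (r - h) / T (r + h) - C / T r)) F
          (𝓝 (1 + h / R)⁻¹) := by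
        simpa using (hinv.sub (hsmall C)).const_mul (1 + h / R)⁻¹
      filter_upwards [hlim.eventually_const_lt hRa, hbase, hF (eventually_ge_atTop (R + h))]
        with r h1 ⟨h2, h3, h4, h5⟩ h6
      have h7 := hC (r - h) (by linarith)
      rw [← hhdef, sub_add_cancel] at h7
      have hTr : 0 < T r := h3.trans_le h4
      refine h1.trans_le ?_
      rw [inv_mul_le_iff₀ hc]
      calc T (r - h) / T (r + h) - C / T r ≤ T (r - h) / T r - C / T r := by gcongr
        _ = (T (r - h) - C) / T r := by ring
        _ ≤ ((1 + h / R) * S r) / T r := by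
            gcongr
            linarith [h7]
        _ = (1 + h / R) * (S r / T r) := by ring
    · intro b hb
      obtain ⟨R, hRb, hR⟩ := ((hR1.eventually_lt_const hb).and (eventually_ge_atTop 1)).exists
      obtain ⟨C, hC⟩ := characteristic_shift_le hf' η hR
      have hc : 0 < 1 + h / R := by positivity
      have hlim : Tendsto (fun r => (1 + h / R) * (T (r + h) / T (r - h)) + C / T r) F
          (𝓝 (1 + h / R)) := by
        simpa using (hratio.const_mul (1 + h / R)).add (hsmall C)
      filter_upwards [hlim.eventually_lt_const hRb, hbase, hF (eventually_ge_atTop R)]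
        with r h1 ⟨h2, h3, h4, h5⟩ h6
      have h7 := hC r h6
      have hTr : 0 < T r := h3.trans_le h4
      refine lt_of_le_of_lt ?_ h1
      calc S r / T r ≤ ((1 + h / R) * T (r + h) + C) / T r := by gcongr
        _ = (1 + h / R) * (T (r + h) / T r) + C / T r := by ring
        _ ≤ (1 + h / R) * (T (r + h) / T (r - h)) + C / T r := by
            gcongr
            linarith
  have hfin := hST.sub_const 1
  rw [sub_self] at hfin
  refine hfin.congr' ?_
  filter_upwards [hbase] with r ⟨h2, h3, h4, h5⟩
  have hr : 0 < r := hh.trans h2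
  rw [charT_eq hf' hr, charT_eq hg' hr, sub_div, div_self (h3.trans_le h4).ne']
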